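/- Let F be a field and let A ∈ Mₙ(F) satisfy Aᵢⱼ = 0 for all i > j+1 and A_{j+1,j} ≠ 0 for all 1 ≤ j ≤ n−1 (non-degenerate oper form). Then for every Y ∈ Mₙ(F) there exists X ∈ Mₙ(F) such that (A·X − X·A − Y)ᵢⱼ = 0 whenever i > j+1. Equivalently, ad(A) induces a surjective linear map Mₙ(F)/𝔟 → Mₙ(F)/𝔤^{(−1)}, where 𝔟 ⊆ Mₙ(F) is the subspace of upper triangular matrices and 𝔤^{(−1)} ⊆ Mₙ(F) is the subspace of matrices supported on {(i,j) : i ≤ j+1}. -/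

import Mathlib

/-!
The equation can be solved one column at a time. Since `A` is upper Hessenberg, column `j` of `X * A`
involves only columns `0, …, j + 1` of `X`, and column `j + 1` enters with the nonzero coefficient
`A (j+1) j`. Hence column `j` of `A * X - X * A = Y` determines column `j + 1` of `X` from the
earlier ones, and every column except the last can be matched exactly. The last column has no entry
below the subdiagonal, so nothing is required there.
-/

/-- The first `m` columns of `A * X - X * A` can be made equal to those of `Y`, the last column of
the matrix excepted. -/
theorem exists_clear_columns {F : Type*} [Field F] {n : ℕ}
    (A : Matrix (Fin n) (Fin n) F)
    (hoper : ∀ i j : Fin n, (j : ℕ) + 1 < (i : ℕ) → A i j = 0)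
    (hsub : ∀ i j : Fin n, (i : ℕ) = (j : ℕ) + 1 → A i j ≠ 0)
    (Y : Matrix (Fin n) (Fin n) F) (m : ℕ) :
    ∃ X : Matrix (Fin n) (Fin n) F,
      ∀ i j : Fin n, (j : ℕ) < m → (j : ℕ) + 1 < n → (A * X - X * A - Y) i j = 0 := by
  induction m with
  | zero => exact ⟨0, fun i j hj => absurd hj (Nat.not_lt_zero _)⟩
  | succ m ih =>
    obtain ⟨X, hX⟩ := ih
    by_cases hm : m + 1 < n
    swap
    · exact ⟨X, fun i j _ hj => hX i j (by omega) hj⟩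
    let k : Fin n := ⟨m + 1, hm⟩
    let p : Fin n := ⟨m, by omega⟩
    -- Adding a matrix `V` supported on column `m + 1` subtracts `V i k * A k j` from the entries
    -- in column `j ≤ m`; this vanishes for `j < m`, and for `j = m` cancels the residual.
    let v : Fin n → F := fun i => (A * X - X * A - Y) i p / A k p
    let V : Matrix (Fin n) (Fin n) F := Matrix.of fun i j => if j = k then v i else 0
    have hAV : ∀ i j : Fin n, j ≠ k → (A * V) i j = 0 := by
      intro i j hj
      simp [Matrix.mul_apply, V, hj]
    have hVA : ∀ i j : Fin n, (V * A) i j = v i * A k j := by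
      intro i j
      simp [Matrix.mul_apply, V]
    refine ⟨X + V, fun i j hjm hjn => ?_⟩
    have hjk : j ≠ k := fun h => by
      have := congrArg Fin.val h
      simp only [k] at this
      omega
    have hsplit : (A * (X + V) - (X + V) * A - Y) i j
        = (A * X - X * A - Y) i j - v i * A k j := by
      rw [← hVA i j, mul_add, add_mul]
      simp only [Matrix.sub_apply, Matrix.add_apply, hAV i j hjk]
      ring
    rw [hsplit]
    rcases Nat.lt_succ_iff_lt_or_eq.mp hjm with hlt | heq
    · rw [hX i j hlt hjn, hoper k j (by simp only [k]; omega)]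
      simp
    · obtain rfl : j = p := Fin.ext heq
      have hk : A k p ≠ 0 := hsub k p rfl
      simp only [v]
      rw [div_mul_cancel₀ _ hk, sub_self]

/-- **Surjectivity of `ad(A)` modulo the oper subspace.** Let `F` be a field and
`A ∈ Mₙ(F)` in non-degenerate oper form: `A i j = 0` whenever `i > j + 1`, and
all subdiagonal entries `A (j+1) j` are nonzero. Then for every `Y ∈ Mₙ(F)`
there exists `X ∈ Mₙ(F)` such that `A·X − X·A − Y` has all entries below the
subdiagonal equal to zero, i.e. `(A·X − X·A − Y) i j = 0` whenever `i > j + 1`.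
Equivalently, `ad(A)` induces a surjection `Mₙ(F)/𝔟 → Mₙ(F)/𝔤^{(−1)}`. -/
theorem ad_oper_surjective_mod_oper_subspace
    {F : Type*} [Field F] (n : ℕ)
    (A : Matrix (Fin n) (Fin n) F)
    (hoper : ∀ i j : Fin n, (j : ℕ) + 1 < (i : ℕ) → A i j = 0)
    (hsub : ∀ i j : Fin n, (i : ℕ) = (j : ℕ) + 1 → A i j ≠ 0) :
    ∀ Y : Matrix (Fin n) (Fin n) F,
      ∃ X : Matrix (Fin n) (Fin n) F,
        ∀ i j : Fin n, (j : ℕ) + 1 < (i : ℕ) → (A * X - X * A - Y) i j = 0 := by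
  intro Y
  obtain ⟨X, hX⟩ := exists_clear_columns A hoper hsub Y n
  exact ⟨X, fun i j hij => hX i j j.isLt (hij.trans i.isLt)⟩
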